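/- Let p be an odd prime and let 1 ≤ m ≤ n be integers. Then the group ℤ/pⁿℤ × ℤ/pᵐℤ is bad: there exists a group operation ∘ on ℤ/pⁿℤ × ℤ/pᵐℤ such that (ℤ/pⁿℤ × ℤ/pᵐℤ, +, ∘) is a skew brace and some subgroup of (ℤ/pⁿℤ × ℤ/pᵐℤ, ∘) is not a left ideal of the skew brace. -/

import Mathlib

section SkewBraceDefs

variable {G : Type*}

/-- `op` is a group operation on `G` (associative, with identity and inverses). -/
def IsGroupOp (op : G → G → G) : Prop :=
  (∀ a b c : G, op (op a b) c = op a (op b c)) ∧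
  ∃ e : G, (∀ a : G, op e a = a ∧ op a e = a) ∧ ∀ a : G, ∃ b : G, op a b = e ∧ op b a = e

/-- `(G, *, op)` is a skew brace: `op` is a group operation and the brace relation
`a ∘ (b * c) = (a ∘ b) * a⁻¹ * (a ∘ c)` holds. -/
def IsSkewBrace [Group G] (op : G → G → G) : Prop :=
  IsGroupOp op ∧ ∀ a b c : G, op a (b * c) = op a b * a⁻¹ * op a c

/-- `S` is a subgroup of `(G, op)` (the two operations of a skew brace share the
identity `1`). -/
def IsCircSubgroup [Group G] (op : G → G → G) (S : Set G) : Prop :=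
  (1 : G) ∈ S ∧ (∀ a ∈ S, ∀ b ∈ S, op a b ∈ S) ∧
  ∀ a ∈ S, ∃ b ∈ S, op a b = 1 ∧ op b a = 1

/-- A left ideal of the skew brace `(G, *, op)`: a subgroup `I` of `(G, *)` with
`γ_a(I) ⊆ I` for all `a`, where `γ_a b = a⁻¹ * (a ∘ b)`. -/
def IsLeftIdeal [Group G] (op : G → G → G) (I : Subgroup G) : Prop :=
  ∀ a : G, ∀ b ∈ I, a⁻¹ * op a b ∈ I

/-- Additive version of `IsSkewBrace`: `a ∘ (b + c) = (a ∘ b) - a + (a ∘ c)`. -/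
def IsSkewBraceAdd [AddGroup G] (op : G → G → G) : Prop :=
  IsGroupOp op ∧ ∀ a b c : G, op a (b + c) = op a b - a + op a c

/-- Additive version of `IsCircSubgroup`. -/
def IsCircSubgroupAdd [AddGroup G] (op : G → G → G) (S : Set G) : Prop :=
  (0 : G) ∈ S ∧ (∀ a ∈ S, ∀ b ∈ S, op a b ∈ S) ∧
  ∀ a ∈ S, ∃ b ∈ S, op a b = 0 ∧ op b a = 0

/-- Additive version of `IsLeftIdeal`: `γ_a b = -a + (a ∘ b)`. -/
def IsLeftIdealAdd [AddGroup G] (op : G → G → G) (I : AddSubgroup G) : Prop :=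
  ∀ a : G, ∀ b ∈ I, -a + op a b ∈ I

end SkewBraceDefs

/-!
For a biadditive map `β : A × A → B`, the operation
`(x, y) ∘ (x', y') = (x + x', y + y' + β x x')` makes `A × B` a skew brace. If `β` is the
polarization of some `q : A → B`, then the shear `(x, y) ↦ (x, y + q x)` is an isomorphism from
`(A × B, +)` to `(A × B, ∘)`, so the graph of `q`, being the image of `A × 0`, is a `∘`-subgroup.
It is an additive subgroup only if `q` is additive, that is, `β = 0`. For `M ∣ N`, the squaring
map `ℤ/N → ℤ/M` has polarization `2 x x'`, which is nonzero unless `M ∣ 2`.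
-/

/-- The additively written group `G` is *bad*: it carries a skew brace structure with a
`∘`-subgroup that is not (the carrier of) a left ideal. Unlike in the paper, `G` may be
infinite. -/
def IsBadAddGroup (G : Type*) [AddGroup G] : Prop :=
  ∃ op : G → G → G, IsSkewBraceAdd op ∧
    ∃ S : Set G, IsCircSubgroupAdd op S ∧
      ¬ ∃ I : AddSubgroup G, (I : Set G) = S ∧ IsLeftIdealAdd op I

section TwistedAdd

variable {A B : Type*} [AddGroup A] [AddCommGroup B] (β : A →+ A →+ B)

/-- The group operation on `A × B` of the central extension of `A` by `B` with the biadditive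
`2`-cocycle `β`; it serves as the operation `∘` of a skew brace on `A × B`. -/
def twistedAdd (a b : A × B) : A × B :=
  (a.1 + b.1, a.2 + b.2 + β a.1 b.1)

/-- The inverse for `twistedAdd β`. -/
def twistedNeg (a : A × B) : A × B :=
  (-a.1, -a.2 + β a.1 a.1)

theorem twistedAdd_assoc (a b c : A × B) :
    twistedAdd β (twistedAdd β a b) c = twistedAdd β a (twistedAdd β b c) := by
  ext
  · exact add_assoc _ _ _
  · simp only [twistedAdd, map_add, AddMonoidHom.add_apply]
    abel

theorem twistedAdd_twistedNeg (a : A × B) : twistedAdd β a (twistedNeg β a) = 0 := by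
  ext <;> simp [twistedAdd, twistedNeg]

theorem twistedNeg_twistedAdd (a : A × B) : twistedAdd β (twistedNeg β a) a = 0 := by
  ext <;> simp [twistedAdd, twistedNeg]

theorem isGroupOp_twistedAdd : IsGroupOp (twistedAdd β) :=
  ⟨twistedAdd_assoc β, 0, fun a => by constructor <;> ext <;> simp [twistedAdd],
    fun a => ⟨twistedNeg β a, twistedAdd_twistedNeg β a, twistedNeg_twistedAdd β a⟩⟩

theorem isSkewBraceAdd_twistedAdd : IsSkewBraceAdd (twistedAdd β) := by
  refine ⟨isGroupOp_twistedAdd β, fun a b c => ?_⟩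
  ext
  · simp [twistedAdd, sub_eq_add_neg, add_assoc]
  · simp only [twistedAdd, Prod.snd_add, Prod.fst_add, Prod.snd_sub, map_add]
    abel

end TwistedAdd

section Graph

variable {A B : Type*} [AddGroup A] [AddCommGroup B]

theorem isCircSubgroupAdd_twistedAdd_graphOn {β : A →+ A →+ B} {q : A → B}
    (hq : ∀ x y, q (x + y) = q x + q y + β x y) :
    IsCircSubgroupAdd (twistedAdd β) (Set.univ.graphOn q) := by
  have hq_zero : q 0 = 0 := by simpa using hq 0 0
  have hq_neg (x : A) : q (-x) = -q x + β x x := by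
    have hx : q x + q (-x) + -β x x = 0 := by simpa [hq_zero] using (hq x (-x)).symm
    exact eq_neg_add_of_add_eq (add_neg_eq_zero.1 hx)
  simp only [IsCircSubgroupAdd, Set.mem_graphOn, Set.mem_univ, true_and]
  refine ⟨hq_zero, fun a ha b hb => ?_, fun a ha => ⟨twistedNeg β a, ?_,
    twistedAdd_twistedNeg β a, twistedNeg_twistedAdd β a⟩⟩
  · simp only [twistedAdd, hq, ha, hb]
  · simp only [twistedNeg, hq_neg, ha]

theorem map_add_of_coe_addSubgroup_eq_graphOn {I : AddSubgroup (A × B)} {q : A → B}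
    (hI : (I : Set (A × B)) = Set.univ.graphOn q) (x y : A) : q (x + y) = q x + q y := by
  have mem_iff (a : A × B) : a ∈ I ↔ q a.1 = a.2 := by simp [← SetLike.mem_coe, hI]
  have hx : (x, q x) ∈ I := (mem_iff _).2 rfl
  have hy : (y, q y) ∈ I := (mem_iff _).2 rfl
  exact (mem_iff _).1 (I.add_mem hx hy)

theorem isBadAddGroup_prod_of_map_add_eq {β : A →+ A →+ B} {q : A → B}
    (hq : ∀ x y, q (x + y) = q x + q y + β x y) (hβ : β ≠ 0) : IsBadAddGroup (A × B) := by
  refine ⟨twistedAdd β, isSkewBraceAdd_twistedAdd β, Set.univ.graphOn q,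
    isCircSubgroupAdd_twistedAdd_graphOn hq, ?_⟩
  rintro ⟨I, hI, -⟩
  refine hβ (AddMonoidHom.ext fun x => AddMonoidHom.ext fun y => ?_)
  have hadd : q x + q y + β x y = q x + q y :=
    (hq x y).symm.trans (map_add_of_coe_addSubgroup_eq_graphOn hI x y)
  exact add_eq_left.1 hadd

end Graph

theorem isBadAddGroup_prod_of_mul_add_mul_ne_zero {A S : Type*} [AddGroup A]
    [NonUnitalNonAssocRing S] (f : A →+ S) {x y : A} (hxy : f x * f y + f y * f x ≠ 0) :
    IsBadAddGroup (A × S) := by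
  let mul : S →+ S →+ S := AddMonoidHom.mul
  let β : A →+ A →+ S := ((mul + mul.flip).comp f).compl₂ f
  have hβ_apply (a b : A) : β a b = f a * f b + f b * f a := rfl
  refine isBadAddGroup_prod_of_map_add_eq (β := β) (q := fun a => f a * f a) (fun a b => ?_)
    fun hβ => hxy ?_
  · simp only [hβ_apply, map_add, mul_add, add_mul]
    abel
  · rw [← hβ_apply, hβ, AddMonoidHom.zero_apply, AddMonoidHom.zero_apply]

theorem not_pow_dvd_two_of_odd {p m : ℕ} (hp : p ≠ 1) (hodd : Odd p) (hm : m ≠ 0) :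
    ¬ p ^ m ∣ 2 := fun hdvd =>
  (Nat.pow_eq_one.1 (hodd.pow.coprime_two_right.eq_one_of_dvd hdvd)).elim hp hm

theorem cyclic_pp_bad_general {M N : ℕ} (hMN : M ∣ N) (hM : ¬ M ∣ 2) :
    IsBadAddGroup (ZMod N × ZMod M) := by
  refine isBadAddGroup_prod_of_mul_add_mul_ne_zero (ZMod.castHom hMN (ZMod M)).toAddMonoidHom
    (x := 1) (y := 1) ?_
  have two_ne_zero : ((2 : ℕ) : ZMod M) ≠ 0 := mt (ZMod.natCast_eq_zero_iff 2 M).1 hM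
  simpa only [RingHom.toAddMonoidHom_eq_coe, AddMonoidHom.coe_coe, map_one, mul_one,
    one_add_one_eq_two, Nat.cast_ofNat] using two_ne_zero

/-- **Example 3.5.** For an odd prime `p` and `1 ≤ m ≤ n`, the group `ℤ/pⁿℤ × ℤ/pᵐℤ` is
bad: some skew brace operation `∘` admits a `∘`-subgroup that is not a left ideal. -/
theorem cyclic_pp_bad (p : ℕ) (hp : p.Prime) (hodd : Odd p)
    (m n : ℕ) (hm : 1 ≤ m) (hmn : m ≤ n) :
    ∃ op : ZMod (p ^ n) × ZMod (p ^ m) → ZMod (p ^ n) × ZMod (p ^ m) →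
        ZMod (p ^ n) × ZMod (p ^ m),
      IsSkewBraceAdd op ∧
      ∃ S : Set (ZMod (p ^ n) × ZMod (p ^ m)), IsCircSubgroupAdd op S ∧
        ¬ ∃ I : AddSubgroup (ZMod (p ^ n) × ZMod (p ^ m)),
          (I : Set (ZMod (p ^ n) × ZMod (p ^ m))) = S ∧ IsLeftIdealAdd op I :=
  cyclic_pp_bad_general (pow_dvd_pow p hmn)
    (not_pow_dvd_two_of_odd hp.ne_one hodd (Nat.one_le_iff_ne_zero.1 hm))
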